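/- Let σ : A → A⁺ be a substitution that is l-primitive and tame. Then the substitution dynamical system (X_σ, T) is minimal. -/

import Mathlib

/-!
Tameness makes long letters appear with bounded gaps. Indeed the first long letters of
`a, σ(a), σ²(a), …` are eventually periodic, and along the period no short letters may precede
them, since a periodic first long letter would otherwise be left isolated; so short prefixes of
the words `σⁿ(a)` are bounded in length (`exists_prefix_bound`), and symmetrically so are short
suffixes. An induction on `n` then bounds all runs of short letters in the words `σⁿ(a)`
(`exists_run_bound`).

Let `w` be a factor of `σⁿ(a)` with `a` long, and let `k` be an exponent of `l`-primitivity, so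
that `w` is a factor of `σⁿ⁺ᵏ(b)` for every long `b`. A very long word `V` of the language
contains `σⁿ⁺ᵏ(U)` for some long factor `U` of a word `σᵉ(c)`, and `U` contains a long letter `b`;
hence `w` is a factor of `V` (`exists_recurrence_bound`). A factor of a point of `X_σ` extends to
arbitrarily long words of the language, so it occurs in an iterate of a long letter, and therefore
it occurs in every point of `X_σ`: all orbits are dense. Nonemptiness of `X_σ` is a compactness
argument, using the arbitrarily long words `σⁿ(a)`.
-/

namespace SubstMin

variable {A : Type*}

/-- Apply a map `σ : A → A⁺` to a word by concatenation. -/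
def substW (σ : A → List A) (w : List A) : List A := w.flatMap σ

/-- `n`-th iterate of the substitution applied to a word. -/
def substIter (σ : A → List A) (n : ℕ) (w : List A) : List A := (substW σ)^[n] w

/-- The set `A_l` of letters `a` with `|σⁿ(a)| → ∞`. -/
def longLetters (σ : A → List A) : Set A :=
  {a | Filter.Tendsto (fun n => (substIter σ n [a]).length) Filter.atTop Filter.atTop}

/-- The set `A_s = A \ A_l`. -/
def shortLetters (σ : A → List A) : Set A := (longLetters σ)ᶜ

/-- `σ` is a substitution: letters map to nonempty words and `A_l ≠ ∅`. -/
def IsSubstitution (σ : A → List A) : Prop :=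
  (∀ a, σ a ≠ []) ∧ (longLetters σ).Nonempty

/-- The language `L(σ)`: factors of some `σⁿ(a)`, `n ≥ 1`. -/
def lang (σ : A → List A) : Set (List A) :=
  {w | ∃ (a : A) (n : ℕ), 1 ≤ n ∧ w <:+: substIter σ n [a]}

/-- The finite factor `x[s,t]` of a bi-infinite sequence. -/
def factorOf (x : ℤ → A) (s t : ℤ) : List A :=
  (List.range (t - s + 1).toNat).map fun i => x (s + (i : ℤ))

/-- The substitution dynamical system `X_σ`. -/
def XSub (σ : A → List A) : Set (ℤ → A) :=
  {x | ∀ s t : ℤ, s ≤ t → factorOf x s t ∈ lang σ}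

/-- The left shift `T`. -/
def shiftT (x : ℤ → A) : ℤ → A := fun i => x (i + 1)

/-- A subshift is minimal if it is nonempty and has no nonempty proper closed
shift-invariant subset. -/
def IsMinimalSubshift [TopologicalSpace A] (X : Set (ℤ → A)) : Prop :=
  X.Nonempty ∧ ∀ Y : Set (ℤ → A), Y ⊆ X → Y.Nonempty → IsClosed Y →
    shiftT '' Y = Y → Y = X

/-- `a ∈ A_l` is left isolated: `σⁿ(a) = u a w` with `u ∈ A_s⁺`, `w ∈ A*`. -/
def LeftIsolated (σ : A → List A) (a : A) : Prop :=
  ∃ n : ℕ, 1 ≤ n ∧ ∃ u w : List A, u ≠ [] ∧ (∀ b ∈ u, b ∈ shortLetters σ) ∧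
    substIter σ n [a] = u ++ a :: w

/-- `a ∈ A_l` is right isolated: `σᵐ(a) = w a u` with `u ∈ A_s⁺`, `w ∈ A*`. -/
def RightIsolated (σ : A → List A) (a : A) : Prop :=
  ∃ n : ℕ, 1 ≤ n ∧ ∃ u w : List A, u ≠ [] ∧ (∀ b ∈ u, b ∈ shortLetters σ) ∧
    substIter σ n [a] = w ++ a :: u

/-- `σ` is tame: no letter of `A_l` is left or right isolated. -/
def Tame (σ : A → List A) : Prop :=
  ∀ a ∈ longLetters σ, ¬ LeftIsolated σ a ∧ ¬ RightIsolated σ a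

/-- `σ` is `l`-primitive. -/
def LPrimitive (σ : A → List A) : Prop :=
  ∃ n : ℕ, 1 ≤ n ∧ ∀ a ∈ longLetters σ, ∀ b ∈ longLetters σ, a ∈ substIter σ n [b]

/-- `a → b` : `b` occurs in `σⁿ(a)` for some `n ≥ 1`. -/
def arrow (σ : A → List A) (a b : A) : Prop :=
  ∃ n : ℕ, 1 ≤ n ∧ b ∈ substIter σ n [a]

/-- `A_{∘,l} = {a ∈ A_l | a → a}`. -/
def circLong (σ : A → List A) : Set A := {a | a ∈ longLetters σ ∧ arrow σ a a}

/-- `A_{min,l}`: letters of `A_l` minimal in `A_l`. -/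
def minLong (σ : A → List A) : Set A :=
  {a | a ∈ longLetters σ ∧ ∀ b ∈ longLetters σ, arrow σ a b → arrow σ b a}

/-- `x` is a periodic point of the shift. -/
def IsPeriodicPoint (x : ℤ → A) : Prop := ∃ p : ℕ, 1 ≤ p ∧ shiftT^[p] x = x

/-- `X` is a single periodic orbit. -/
def IsSinglePeriodicOrbit (X : Set (ℤ → A)) : Prop :=
  ∃ x : ℤ → A, IsPeriodicPoint x ∧ X = Set.range fun i : ℤ => fun j => x (j + i)

/-- `y = σ(x)` : `y` is obtained from `x` by applying `σ` to each coordinate and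
concatenating, with `σ(x(0))` placed starting at coordinate `0`. -/
def IsSubstImage (σ : A → List A) (x y : ℤ → A) : Prop :=
  ∃ o : ℤ → ℤ, o 0 = 0 ∧ (∀ i : ℤ, o (i + 1) = o i + (σ (x i)).length) ∧
    ∀ i : ℤ, factorOf y (o i) (o (i + 1) - 1) = σ (x i)

/-- The map `s` on nonempty subsets of `A_l`: `s(F) = ⋃_{a ∈ F} (Lett(σ(a)) ∩ A_l)`. -/
def sMap (σ : A → List A) (F : Set A) : Set A :=
  {b | b ∈ longLetters σ ∧ ∃ a ∈ F, b ∈ σ a}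

end SubstMin

/-! ### Words and iterates -/

namespace SubstMin

section Words

variable {A : Type*} {σ : A → List A}

lemma substIter_zero (w : List A) : substIter σ 0 w = w := rfl

lemma substIter_succ (n : ℕ) (w : List A) :
    substIter σ (n + 1) w = substIter σ n (substW σ w) := by
  simp [substIter]

lemma substIter_add (m n : ℕ) (w : List A) :
    substIter σ (m + n) w = substIter σ m (substIter σ n w) := by
  simp [substIter, Function.iterate_add_apply]

lemma substIter_append (n : ℕ) (v w : List A) :
    substIter σ n (v ++ w) = substIter σ n v ++ substIter σ n w := by
  induction n generalizing v w with
  | zero => rfl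
  | succ n ih => simp only [substIter_succ, substW, List.flatMap_append, ih]

lemma substIter_nil (n : ℕ) : substIter σ n [] = [] := by
  induction n with
  | zero => rfl
  | succ n ih => simpa [substIter_succ, substW] using ih

lemma substIter_eq_flatMap (n : ℕ) (w : List A) :
    substIter σ n w = w.flatMap fun b => substIter σ n [b] := by
  induction w with
  | nil => simp [substIter_nil]
  | cons a w ih =>
    rw [← List.singleton_append, substIter_append, ih]
    simp

lemma mem_substIter {n : ℕ} {w : List A} {c : A} :
    c ∈ substIter σ n w ↔ ∃ b ∈ w, c ∈ substIter σ n [b] := by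
  rw [substIter_eq_flatMap]
  simp

lemma substIter_infix {n : ℕ} {v w : List A} (h : v <:+: w) :
    substIter σ n v <:+: substIter σ n w := by
  obtain ⟨p, q, rfl⟩ := h
  simp only [substIter_append]
  exact ⟨_, _, rfl⟩

lemma singleton_infix {a : A} {w : List A} (h : a ∈ w) : [a] <:+: w := by
  obtain ⟨p, q, rfl⟩ := List.append_of_mem h
  exact ⟨p, q, by simp⟩

lemma length_flatMap_le {B : Type*} {g : A → List B} {G : ℕ} {w : List A}
    (h : ∀ b ∈ w, (g b).length ≤ G) : (w.flatMap g).length ≤ w.length * G := by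
  induction w with
  | nil => simp
  | cons a w ih =>
    have h1 := ih fun b hb => h b (by simp [hb])
    have h2 := h a (by simp)
    simp only [List.flatMap_cons, List.length_append, List.length_cons]
    linarith [add_mul w.length 1 G]

lemma length_le_substIter (hne : ∀ a, σ a ≠ []) (n : ℕ) (w : List A) :
    w.length ≤ (substIter σ n w).length := by
  induction n generalizing w with
  | zero => exact le_rfl
  | succ n ih =>
    rw [substIter_succ]
    refine le_trans ?_ (ih _)
    induction w with
    | nil => simp
    | cons a w ihw =>
      have := List.length_pos_iff.2 (hne a)
      simp only [substW, List.flatMap_cons, List.length_append, List.length_cons] at *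
      omega

lemma length_substIter_mono (hne : ∀ a, σ a ≠ []) (w : List A) :
    Monotone fun n => (substIter σ n w).length := by
  intro m n hmn
  obtain ⟨k, rfl⟩ := Nat.exists_eq_add_of_le' hmn
  simp only [substIter_add]
  exact length_le_substIter hne _ _

/-- The usual trichotomy for an occurrence of a word in a concatenation: it lies in one of the
two pieces or straddles the cut. -/
lemma infix_append_cases {r v w : List A} (h : r <:+: v ++ w) :
    r <:+: v ∨ r <:+: w ∨ ∃ s p, r = s ++ p ∧ s <:+ v ∧ p <+: w := by
  obtain ⟨a, b, h⟩ := h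
  rw [List.append_assoc, List.append_eq_append_iff] at h
  rcases h with ⟨c, rfl, h⟩ | ⟨c, rfl, rfl⟩
  · rw [List.append_eq_append_iff] at h
    rcases h with ⟨d, rfl, rfl⟩ | ⟨d, rfl, rfl⟩
    · exact Or.inl ⟨a, d, by simp⟩
    · exact Or.inr (Or.inr ⟨c, d, rfl, ⟨a, rfl⟩, ⟨b, rfl⟩⟩)
  · exact Or.inr (Or.inl ⟨c, b, by simp⟩)

lemma prefix_append_cases {r v w : List A} (h : r <+: v ++ w) :
    r <+: v ∨ ∃ p, r = v ++ p ∧ p <+: w := by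
  obtain ⟨b, h⟩ := h
  rw [List.append_eq_append_iff] at h
  rcases h with ⟨c, rfl, rfl⟩ | ⟨c, rfl, rfl⟩
  · exact Or.inl ⟨c, rfl⟩
  · exact Or.inr ⟨c, rfl, ⟨b, rfl⟩⟩

lemma exists_core_of_prefix {B : Type*} {g : A → List B} {G : ℕ} (hG : ∀ b, (g b).length ≤ G)
    {U : List A} {V : List B} (h : V <+: U.flatMap g) :
    ∃ U', U' <+: U ∧ U'.flatMap g <+: V ∧ V.length ≤ (U'.flatMap g).length + G := by
  induction U generalizing V with
  | nil =>
    obtain rfl : V = [] := by simpa using h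
    exact ⟨[], by simp⟩
  | cons b U ih =>
    rw [List.flatMap_cons] at h
    rcases prefix_append_cases h with h | ⟨p, rfl, hp⟩
    · exact ⟨[], by simp, by simp, by simpa using h.length_le.trans (hG b)⟩
    · obtain ⟨U', h1, h2, h3⟩ := ih hp
      refine ⟨b :: U', by simpa using h1, ?_, ?_⟩
      · simpa using h2
      · simp only [List.flatMap_cons, List.length_append] at *
        omega

/-- Desubstitution: a factor of `g(u₁)⋯g(uₖ)` is, up to two incomplete blocks at its ends, the
image of a factor of `u₁⋯uₖ`. -/
lemma exists_core_of_infix {B : Type*} {g : A → List B} {G : ℕ} (hG : ∀ b, (g b).length ≤ G)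
    {U : List A} {V : List B} (h : V <:+: U.flatMap g) :
    ∃ U', U' <:+: U ∧ U'.flatMap g <:+: V ∧ V.length ≤ (U'.flatMap g).length + 2 * G := by
  induction U with
  | nil =>
    obtain rfl : V = [] := by simpa using h
    exact ⟨[], by simp⟩
  | cons b U ih =>
    rw [List.flatMap_cons] at h
    rcases infix_append_cases h with h | h | ⟨s, p, rfl, hs, hp⟩
    · have := h.length_le.trans (hG b)
      exact ⟨[], List.nil_infix, by simp, by simp; omega⟩
    · obtain ⟨U', h1, h2⟩ := ih h
      exact ⟨U', h1.trans (List.suffix_cons _ _).isInfix, h2⟩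
    · obtain ⟨U', h1, h2, h3⟩ := exists_core_of_prefix hG hp
      refine ⟨U', h1.isInfix.trans (List.suffix_cons _ _).isInfix,
        h2.isInfix.trans (List.suffix_append _ _).isInfix, ?_⟩
      have := hs.length_le.trans (hG b)
      simp only [List.length_append]
      omega

end Words

/-! ### Short and long letters -/

section Letters

variable {A : Type*} {σ : A → List A}

lemma long_of_mem {a b : A} {n : ℕ} (hb : b ∈ longLetters σ) (h : b ∈ substIter σ n [a]) :
    a ∈ longLetters σ := by
  refine (Filter.tendsto_add_atTop_iff_nat n).1 ?_
  refine Filter.tendsto_atTop_mono (fun m => ?_) hb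
  rw [substIter_add]
  exact (substIter_infix (singleton_infix h)).length_le

lemma short_substIter {w : List A} (hw : ∀ a ∈ w, a ∈ shortLetters σ) (n : ℕ) :
    ∀ b ∈ substIter σ n w, b ∈ shortLetters σ := by
  intro b hb hlong
  obtain ⟨a, ha, hba⟩ := mem_substIter.1 hb
  exact hw a ha (long_of_mem hlong hba)

/-- Lengths are nondecreasing under a nonerasing `σ`, so a letter whose images do not grow to
infinity has images of bounded length; finiteness of the alphabet makes the bound uniform. -/
lemma exists_short_bound [Finite A] (hne : ∀ a, σ a ≠ []) :
    ∃ S, ∀ a ∈ shortLetters σ, ∀ n, (substIter σ n [a]).length ≤ S := by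
  have h : ∀ a, ∃ S, a ∈ shortLetters σ → ∀ n, (substIter σ n [a]).length ≤ S := by
    intro a
    by_contra! hc
    exact (hc 0).1 (Filter.tendsto_atTop_atTop_of_monotone (length_substIter_mono hne [a])
      fun b => (hc b).2.imp fun _ h => h.le)
  choose S hS using h
  obtain ⟨M, hM⟩ := (Set.finite_range S).bddAbove
  exact ⟨M, fun a ha n => (hS a ha n).trans (hM ⟨a, rfl⟩)⟩

lemma exists_long_mem [Finite A] (hne : ∀ a, σ a ≠ []) {a : A} (ha : a ∈ longLetters σ) (n : ℕ) :
    ∃ b ∈ substIter σ n [a], b ∈ longLetters σ := by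
  by_contra! hc
  obtain ⟨S, hS⟩ := exists_short_bound hne
  have h := (Filter.tendsto_add_atTop_iff_nat n).2 ha
  obtain ⟨m, hm⟩ := (h.eventually_gt_atTop ((substIter σ n [a]).length * S)).exists
  rw [substIter_add, substIter_eq_flatMap m] at hm
  exact absurd (length_flatMap_le fun b hb => hS b (hc b hb) m) (not_le.2 hm)

lemma exists_iter_bound [Finite A] (hne : ∀ a, σ a ≠ []) (N : ℕ) :
    ∃ G, ∀ n ≤ N, ∀ a, (substIter σ n [a]).length ≤ G := by
  obtain ⟨M, hM⟩ := (Set.finite_range fun a => (substIter σ N [a]).length).bddAbove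
  exact ⟨M, fun n hn a => (length_substIter_mono hne [a] hn).trans (hM ⟨a, rfl⟩)⟩

/-- If `σᵈ(c) = c w` with `c` long, then every iterate `σᵐ(c)` starts with a long letter: a short
first letter of `σᵐ(c)` would make `σᵈᵐ(c)` start with a short letter. -/
lemma exists_long_head (hne : ∀ a, σ a ≠ []) {c : A} (hc : c ∈ longLetters σ) {d : ℕ}
    (hd : 1 ≤ d) {w : List A} (hw : substIter σ d [c] = c :: w) (m : ℕ) :
    ∃ s t, s ∈ longLetters σ ∧ substIter σ m [c] = s :: t := by
  have hpow : ∀ k, ∃ v, substIter σ (k * d) [c] = c :: v := by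
    intro k
    induction k with
    | zero => exact ⟨[], by simp [substIter_zero]⟩
    | succ k ih =>
      obtain ⟨v, hv⟩ := ih
      rw [Nat.succ_mul, substIter_add, hw, ← List.singleton_append, substIter_append, hv]
      exact ⟨_, rfl⟩
  have hpos : ∀ n (b : A), substIter σ n [b] ≠ [] := fun n b h => by
    simpa [h] using length_le_substIter hne n [b]
  obtain ⟨s, t, hst⟩ := List.exists_cons_of_ne_nil (hpos m c)
  refine ⟨s, t, ?_, hst⟩
  obtain ⟨v, hv⟩ := hpow m
  obtain ⟨e, he⟩ := Nat.exists_eq_add_of_le' (Nat.le_mul_of_pos_right m hd)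
  rw [he, substIter_add, hst, ← List.singleton_append, substIter_append] at hv
  obtain ⟨s', t', hs⟩ := List.exists_cons_of_ne_nil (hpos e s)
  rw [hs, List.cons_append, List.cons.injEq] at hv
  refine long_of_mem hc (n := e) ?_
  rw [hs, hv.1]
  simp

lemma short_prefix_of_append {r u t : List A} {s : A} (hr : ∀ b ∈ r, b ∈ shortLetters σ)
    (hs : s ∈ longLetters σ) (h : r <+: u ++ s :: t) : r <+: u := by
  rcases prefix_append_cases h with h | ⟨p, rfl, hp⟩
  · exact h
  · cases p with
    | nil => simp
    | cons x p =>
      obtain ⟨rfl, -⟩ := List.cons_prefix_cons.1 hp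
      exact absurd hs (hr x (by simp))

/-- The first long letters of `a, σ(a), σ²(a), …` cannot be pairwise distinct, and a repetition
yields a long letter `c` with `σᵈ(c) = u c w`, `u` short; `u` is empty as `c` is not left
isolated. From then on the short prefix only evolves through the images of a fixed short word. -/
lemma exists_prefix_bound_letter [Finite A] (hne : ∀ a, σ a ≠ [])
    (hiso : ∀ a ∈ longLetters σ, ¬ LeftIsolated σ a) {a : A} (ha : a ∈ longLetters σ) :
    ∃ B, ∀ n r, r <+: substIter σ n [a] → (∀ b ∈ r, b ∈ shortLetters σ) → r.length ≤ B := by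
  classical
  obtain ⟨S, hS⟩ := exists_short_bound hne
  have hfind : ∀ b ∈ longLetters σ, ∀ i, ∃ c,
      (substIter σ i [b]).find? (fun x => decide (x ∈ longLetters σ)) = some c := by
    intro b hb i
    rw [← Option.isSome_iff_exists, List.find?_isSome]
    simpa using exists_long_mem hne hb i
  choose c hcfind using hfind a ha
  obtain ⟨i, j, hij, hcc⟩ : ∃ i j, i < j ∧ c i = c j := by
    obtain ⟨i, j, hij, h⟩ := Finite.exists_ne_map_eq_of_infinite c
    rcases lt_or_gt_of_ne hij with h' | h'
    · exact ⟨i, j, h', h⟩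
    · exact ⟨j, i, h', h.symm⟩
  obtain ⟨hci, u, v, huv, hu⟩ := List.find?_eq_some_iff_append.1 (hcfind i)
  have hci : c i ∈ longLetters σ := by simpa using hci
  have hu : ∀ b ∈ u, b ∈ shortLetters σ := by simpa [shortLetters] using hu
  have hsplit : ∀ m, substIter σ (m + i) [a] =
      substIter σ m u ++ (substIter σ m [c i] ++ substIter σ m v) := by
    intro m
    rw [substIter_add, huv, ← List.singleton_append, substIter_append, substIter_append]
  obtain ⟨d, rfl⟩ := Nat.exists_eq_add_of_le' hij.le
  have hd : 1 ≤ d := by omega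
  -- the first long letter of `σᵈ(c i)` is `c i` itself
  obtain ⟨c', hc'⟩ := hfind (c i) hci d
  have hc'eq : c' = c i := by
    have h := hcfind (d + i)
    have hnone : (substIter σ d u).find? (fun x => decide (x ∈ longLetters σ)) = none := by
      rw [List.find?_eq_none]
      intro x hx
      simpa [shortLetters] using short_substIter hu d x hx
    rw [hsplit, List.find?_append, List.find?_append, hnone, hc', ← hcc] at h
    simpa using h
  obtain ⟨-, u', w, hw, hu'⟩ := List.find?_eq_some_iff_append.1 hc'
  have hu' : ∀ b ∈ u', b ∈ shortLetters σ := by simpa [shortLetters] using hu'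
  rw [hc'eq] at hw
  obtain rfl : u' = [] := by
    by_contra hne'
    exact hiso _ hci ⟨d, hd, u', w, hne', hu', hw⟩
  refine ⟨u.length * S + (substIter σ i [a]).length, fun n r hr hrs => ?_⟩
  rcases le_total n i with hn | hn
  · have h1 : (substIter σ n [a]).length ≤ _ := length_substIter_mono hne [a] hn
    have h2 := hr.length_le
    simp only at h1
    omega
  · obtain ⟨m, rfl⟩ := Nat.exists_eq_add_of_le' hn
    obtain ⟨s, t, hs, hst⟩ := exists_long_head hne hci hd hw m
    rw [hsplit, hst, List.cons_append] at hr
    have h1 := (short_prefix_of_append hrs hs hr).length_le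
    rw [substIter_eq_flatMap] at h1
    have h2 := length_flatMap_le fun b hb => hS b (hu b hb) m
    omega

lemma exists_prefix_bound [Finite A] (hne : ∀ a, σ a ≠ [])
    (hiso : ∀ a ∈ longLetters σ, ¬ LeftIsolated σ a) :
    ∃ B, ∀ a n r, r <+: substIter σ n [a] → (∀ b ∈ r, b ∈ shortLetters σ) → r.length ≤ B := by
  have h : ∀ a, ∃ B, ∀ n r, r <+: substIter σ n [a] →
      (∀ b ∈ r, b ∈ shortLetters σ) → r.length ≤ B := by
    intro a
    by_cases ha : a ∈ longLetters σ
    · exact exists_prefix_bound_letter hne hiso ha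
    · obtain ⟨S, hS⟩ := exists_short_bound hne
      exact ⟨S, fun n r hr _ => hr.length_le.trans (hS a ha n)⟩
  choose B hB using h
  obtain ⟨M, hM⟩ := (Set.finite_range B).bddAbove
  exact ⟨M, fun a n r h1 h2 => (hB a n r h1 h2).trans (hM ⟨a, rfl⟩)⟩

/-- The mirror image of `σ`. -/
def revSubst (σ : A → List A) (a : A) : List A := (σ a).reverse

lemma substIter_revSubst (n : ℕ) (w : List A) :
    substIter (revSubst σ) n w.reverse = (substIter σ n w).reverse := by
  induction n generalizing w with
  | zero => rfl
  | succ n ih =>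
    rw [substIter_succ, substIter_succ, ← ih]
    congr 1
    simp only [substW, List.reverse_flatMap, Function.comp_def]
    rfl

lemma substIter_revSubst_singleton (n : ℕ) (a : A) :
    substIter (revSubst σ) n [a] = (substIter σ n [a]).reverse := by
  simpa using substIter_revSubst (σ := σ) n [a]

lemma longLetters_revSubst : longLetters (revSubst σ) = longLetters σ := by
  ext a
  simp [longLetters, substIter_revSubst_singleton]

lemma exists_suffix_bound [Finite A] (hne : ∀ a, σ a ≠ [])
    (hiso : ∀ a ∈ longLetters σ, ¬ RightIsolated σ a) :
    ∃ B, ∀ a n r, r <:+ substIter σ n [a] → (∀ b ∈ r, b ∈ shortLetters σ) → r.length ≤ B := by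
  obtain ⟨B, hB⟩ := exists_prefix_bound (σ := revSubst σ) (fun a => by simpa [revSubst] using hne a)
    (by
      rintro a ha ⟨n, hn, u, w, hu, hus, h⟩
      rw [longLetters_revSubst] at ha
      refine hiso a ha ⟨n, hn, u.reverse, w.reverse, by simpa using hu, ?_, ?_⟩
      · simpa [shortLetters, longLetters_revSubst] using hus
      · rw [substIter_revSubst_singleton] at h
        rw [← List.reverse_reverse (substIter σ n [a]), h]
        simp)
  refine ⟨B, fun a n r hr hrs => ?_⟩
  simpa using hB a n r.reverse (by simpa [substIter_revSubst_singleton] using hr)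
    (by simpa [shortLetters, longLetters_revSubst] using hrs)

lemma prefix_flatMap_bound {P : A → Prop} {g : A → List A} {B : ℕ}
    (hp : ∀ b r, r <+: g b → (∀ x ∈ r, P x) → r.length ≤ B) {w r : List A}
    (h : r <+: w.flatMap g) (hr : ∀ x ∈ r, P x) : r.length ≤ w.length * B := by
  induction w generalizing r with
  | nil => simpa using h
  | cons b w ih =>
    rw [List.flatMap_cons] at h
    rw [List.length_cons, add_mul, one_mul]
    rcases prefix_append_cases h with h | ⟨p, rfl, h'⟩
    · have := hp b r h hr
      omega
    · have h1 := ih h' fun x hx => hr x (by simp [hx])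
      have h2 := hp b (g b) List.prefix_rfl fun x hx => hr x (by simp [hx])
      rw [List.length_append]
      omega

lemma infix_flatMap_bound {P : A → Prop} {g : A → List A} {B : ℕ}
    (hp : ∀ b r, r <+: g b → (∀ x ∈ r, P x) → r.length ≤ B)
    (hs : ∀ b r, r <:+ g b → (∀ x ∈ r, P x) → r.length ≤ B) {w r : List A}
    (h : r <:+: w.flatMap g) (hr : ∀ x ∈ r, P x) :
    (∃ b, r <:+: g b) ∨ r.length ≤ w.length * B := by
  induction w generalizing r with
  | nil => right; simpa using h
  | cons b w ih =>
    rw [List.flatMap_cons] at h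
    rw [List.length_cons, add_mul, one_mul]
    rcases infix_append_cases h with h | h | ⟨s, p, rfl, h1, h2⟩
    · exact Or.inl ⟨b, h⟩
    · refine (ih h hr).imp_right fun h => ?_
      omega
    · right
      have h3 := hs b s h1 fun x hx => hr x (by simp [hx])
      have h4 := prefix_flatMap_bound hp h2 fun x hx => hr x (by simp [hx])
      rw [List.length_append]
      omega

/-- Key consequence of tameness: runs of short letters in the words `σⁿ(a)` have bounded length.
A run in `σⁿ⁺¹(a) = σⁿ(b₁)⋯σⁿ(bₖ)`, where `σ(a) = b₁⋯bₖ`, either lies inside one block, or it is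
cut into at most `k` pieces, each a short prefix or suffix of a block. -/
lemma exists_run_bound [Finite A] (hne : ∀ a, σ a ≠ []) (htame : Tame σ) :
    ∃ R, ∀ n a r, r <:+: substIter σ n [a] → (∀ b ∈ r, b ∈ shortLetters σ) → r.length ≤ R := by
  obtain ⟨B₁, hB₁⟩ := exists_prefix_bound hne fun a ha => (htame a ha).1
  obtain ⟨B₂, hB₂⟩ := exists_suffix_bound hne fun a ha => (htame a ha).2
  obtain ⟨M, hM⟩ := (Set.finite_range fun a => (σ a).length).bddAbove
  refine ⟨M * (B₁ + B₂) + 1, fun n => ?_⟩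
  induction n with
  | zero =>
    intro a r h _
    have := h.length_le
    simp only [substIter_zero, List.length_singleton] at this
    omega
  | succ n ih =>
    intro a r h hr
    rw [substIter_succ, substIter_eq_flatMap] at h
    rcases infix_flatMap_bound (B := B₁ + B₂)
      (fun b r h h' => (hB₁ b n r h h').trans (Nat.le_add_right _ _))
      (fun b r h h' => (hB₂ b n r h h').trans (Nat.le_add_left _ _)) h hr with ⟨b, hb⟩ | h
    · exact ih b r hb hr
    · have h1 : (substW σ [a]).length ≤ M := hM ⟨a, by simp [substW]⟩
      have h2 := Nat.mul_le_mul_right (B₁ + B₂) h1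
      omega

/-- Uniform recurrence: every word occurring in an image of a long letter occurs in every
sufficiently long word of the language. -/
lemma exists_recurrence_bound [Finite A] (hne : ∀ a, σ a ≠ []) (hprim : LPrimitive σ)
    (htame : Tame σ) {a : A} (ha : a ∈ longLetters σ) {n : ℕ} {w : List A}
    (hw : w <:+: substIter σ n [a]) :
    ∃ K, ∀ V ∈ lang σ, K < V.length → w <:+: V := by
  obtain ⟨k, -, hk⟩ := hprim
  obtain ⟨S, hS⟩ := exists_short_bound hne
  obtain ⟨R, hR⟩ := exists_run_bound hne htame
  obtain ⟨G, hG⟩ := exists_iter_bound hne (n + k)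
  refine ⟨S + (R * G + 2 * G), ?_⟩
  rintro V ⟨c, N, -, hV⟩ hlen
  -- `V` is longer than any image `σ^N(c)` with `N < n + k`
  have hN : n + k ≤ N := by
    by_contra! h
    have h1 := hG N h.le c
    have h2 := hV.length_le
    omega
  obtain ⟨e, rfl⟩ := Nat.exists_eq_add_of_le hN
  rw [substIter_add, substIter_eq_flatMap (n + k)] at hV
  obtain ⟨U', hU', hUV, hle⟩ := exists_core_of_infix (hG (n + k) le_rfl) hV
  obtain ⟨b, hb, hbl⟩ : ∃ b ∈ U', b ∈ longLetters σ := by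
    by_contra! h
    have h1 := hR e c U' hU' h
    have h2 := length_flatMap_le (w := U') fun b _ => hG (n + k) le_rfl b
    have h3 := Nat.mul_le_mul_right G h1
    omega
  rw [← substIter_eq_flatMap] at hUV
  refine hw.trans ((substIter_infix (singleton_infix (hk a ha b hbl))).trans ?_)
  rw [← substIter_add]
  exact (substIter_infix (singleton_infix hb)).trans hUV

end Letters

/-! ### Factors of bi-infinite sequences and the subshift -/

section Subshift

variable {A : Type*} {σ : A → List A}

/-- In `factorOf` the list of indices is cast to a list of integers before mapping; here the cast
is moved into the mapped function. -/
lemma factorOf_eq_map (x : ℤ → A) (s t : ℤ) :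
    factorOf x s t = (List.range (t - s + 1).toNat).map fun i : ℕ => x (s + (i : ℤ)) := by
  unfold factorOf
  change List.map _ (List.flatMap (fun a : ℕ => [(a : ℤ)]) _) = _
  rw [← List.map_eq_flatMap, List.map_map]
  rfl

lemma length_factorOf (x : ℤ → A) (s t : ℤ) : (factorOf x s t).length = (t - s + 1).toNat := by
  simp [factorOf_eq_map]

lemma factorOf_congr {x y : ℤ → A} {s t p : ℤ} (h : ∀ j, s ≤ j → j ≤ t → x j = y (j + p)) :
    factorOf x s t = factorOf y (s + p) (t + p) := by
  have e : t + p - (s + p) + 1 = t - s + 1 := by ring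
  rw [factorOf_eq_map, factorOf_eq_map, e]
  refine List.map_congr_left fun i hi => ?_
  rw [List.mem_range] at hi
  rw [h _ (by omega) (by omega)]
  congr 1
  ring

lemma factorOf_append (x : ℤ → A) {s t u : ℤ} (hst : s ≤ t) (htu : t ≤ u) :
    factorOf x s u = factorOf x s t ++ factorOf x (t + 1) u := by
  simp only [factorOf_eq_map]
  have e : (u - s + 1).toNat = (t - s + 1).toNat + (u - (t + 1) + 1).toNat := by omega
  rw [e, List.range_add, List.map_append, List.map_map]
  congr 1
  refine List.map_congr_left fun i _ => ?_
  simp only [Function.comp_apply]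
  congr 1
  push_cast
  omega

lemma exists_shift_of_infix {x y : ℤ → A} {s t s' t' : ℤ}
    (h : factorOf x s t <:+: factorOf y s' t') :
    ∃ p : ℤ, ∀ j, s ≤ j → j ≤ t → x j = y (j + p) := by
  obtain ⟨a, b, hab⟩ := h
  refine ⟨s' + a.length - s, fun j hj hjt => ?_⟩
  obtain ⟨i, rfl⟩ : ∃ i : ℕ, j = s + i := ⟨(j - s).toNat, by omega⟩
  have hi : i < (factorOf x s t).length := by rw [length_factorOf]; omega
  have h1 : (factorOf y s' t')[a.length + i]? = (factorOf x s t)[i]? := by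
    rw [← hab, List.append_assoc, List.getElem?_append_right (by omega),
      List.getElem?_append_left (by simpa using hi)]
    simp
  have h2 : (factorOf x s t)[i]? = some (x (s + i)) := by
    rw [length_factorOf] at hi
    simp [factorOf_eq_map, List.getElem?_range hi]
  rw [h2] at h1
  obtain ⟨h3, h4⟩ := List.getElem?_eq_some_iff.1 h1
  simp only [factorOf_eq_map, List.getElem_map, List.getElem_range] at h4
  rw [← h4]
  congr 1
  push_cast
  ring

/-- Every window of `x ∈ X_σ` can be seen somewhere in any `y ∈ X_σ`. -/
lemma exists_shift_agree [Finite A] (hne : ∀ a, σ a ≠ []) (hprim : LPrimitive σ)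
    (htame : Tame σ) {x y : ℤ → A} (hx : x ∈ XSub σ) (hy : y ∈ XSub σ) {s t : ℤ} (hst : s ≤ t) :
    ∃ p : ℤ, ∀ j, s ≤ j → j ≤ t → x j = y (j + p) := by
  obtain ⟨S, hS⟩ := exists_short_bound hne
  -- enlarge the window so that it cannot occur in an iterate of a short letter
  obtain ⟨a, n, -, hW⟩ := hx s (t + S) (by omega)
  have ha : a ∈ longLetters σ := by
    by_contra ha
    have h1 := hW.length_le.trans (hS a ha n)
    rw [length_factorOf] at h1
    omega
  have hw : factorOf x s t <:+: substIter σ n [a] := by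
    rw [factorOf_append x hst (by omega)] at hW
    exact (List.prefix_append _ _).isInfix.trans hW
  obtain ⟨K, hK⟩ := exists_recurrence_bound hne hprim htame ha hw
  exact exists_shift_of_infix (hK (factorOf y 0 K) (hy 0 K (by omega))
    (by rw [length_factorOf]; omega))

lemma shift_mem {Y : Set (ℤ → A)} (hY : shiftT '' Y = Y) {y : ℤ → A} (hy : y ∈ Y) (p : ℤ) :
    (fun j => y (j + p)) ∈ Y := by
  induction p using Int.induction_on with
  | zero => simpa using hy
  | succ i ih =>
    rw [← hY]
    refine ⟨_, ih, ?_⟩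
    funext j
    simp only [shiftT]
    congr 1
    ring
  | pred i ih =>
    rw [← hY] at ih
    obtain ⟨z, hz, h⟩ := ih
    convert hz using 1
    funext j
    have := congrFun h (j - 1)
    simp only [shiftT, sub_add_cancel] at this
    rw [this]
    congr 1
    ring

lemma lang_of_infix {v w : List A} (h : v <:+: w) (hw : w ∈ lang σ) : v ∈ lang σ := by
  obtain ⟨a, n, hn, hw⟩ := hw
  exact ⟨a, n, hn, h.trans hw⟩

lemma isClosed_factorOf_mem [TopologicalSpace A] [DiscreteTopology A] (L : Set (List A))
    (s t : ℤ) : IsClosed {x : ℤ → A | factorOf x s t ∈ L} := by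
  let f : (ℤ → A) → (Fin (t - s + 1).toNat → A) := fun x i => x (s + (i : ℕ))
  have hf : Continuous f := continuous_pi fun i => continuous_apply _
  have : {x : ℤ → A | factorOf x s t ∈ L} = f ⁻¹' {g | List.ofFn g ∈ L} := by
    ext x
    have : factorOf x s t = List.ofFn (f x) := by
      apply List.ext_getElem <;> simp [factorOf_eq_map, f]
    simp [this]
  rw [this]
  exact (isClosed_discrete _).preimage hf

/-- A limit point of the words `σⁿ(a)`, `a` long, read around their centres lies in `X_σ`. -/
lemma XSub_nonempty [Finite A] [TopologicalSpace A] [DiscreteTopology A]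
    (hlong : (longLetters σ).Nonempty) : (XSub σ).Nonempty := by
  let F : ℕ → Set (ℤ → A) := fun N => {x | factorOf x (-N) N ∈ lang σ}
  have hmono : ∀ {x : ℤ → A} {s t s' t' : ℤ}, s' ≤ s → s ≤ t → t ≤ t' →
      factorOf x s t <:+: factorOf x s' t' := by
    intro x s t s' t' h1 h2 h3
    have h4 : factorOf x s t <:+: factorOf x s t' := by
      rw [factorOf_append x h2 h3]
      exact (List.prefix_append _ _).isInfix
    rcases h1.eq_or_lt with rfl | h1
    · exact h4
    · rw [factorOf_append x (show s' ≤ s - 1 by omega) (show s - 1 ≤ t' by omega),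
        sub_add_cancel]
      exact h4.trans (List.suffix_append _ _).isInfix
  have hF : (⋂ N, F N).Nonempty := by
    refine IsCompact.nonempty_iInter_of_sequence_nonempty_isCompact_isClosed F ?_ ?_ ?_ ?_
    · intro N x hx
      exact lang_of_infix (hmono (by push_cast; omega) (by omega) (by push_cast; omega)) hx
    · intro N
      obtain ⟨a, ha⟩ := hlong
      obtain ⟨n, hn, hn1⟩ := ((ha.eventually_ge_atTop (2 * N + 1)).and
        (Filter.eventually_ge_atTop 1)).exists
      refine ⟨fun i => (substIter σ n [a]).getD (i + N).toNat a, a, n, hn1, ?_⟩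
      refine List.IsPrefix.isInfix ?_
      rw [List.prefix_iff_eq_take]
      apply List.ext_getElem
      · rw [List.length_take, length_factorOf]
        omega
      · intro i h1 h2
        rw [length_factorOf] at h1
        have h3 : (-(N : ℤ) + i + N).toNat = i := by omega
        have h4 : i < (substIter σ n [a]).length := by omega
        simp [factorOf_eq_map, h4]
    · exact (isClosed_factorOf_mem _ _ _).isCompact
    · exact fun N => isClosed_factorOf_mem _ _ _
  obtain ⟨x, hx⟩ := hF
  refine ⟨x, fun s t hst => ?_⟩
  obtain ⟨N, hN⟩ : ∃ N : ℕ, N = s.natAbs + t.natAbs := ⟨_, rfl⟩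
  exact lang_of_infix (hmono (by omega) hst (by omega)) (Set.mem_iInter.1 hx N)

end Subshift

end SubstMin

/-- An `l`-primitive tame substitution gives a minimal
substitution dynamical system. -/
theorem statement0 {A : Type*} [Fintype A] [TopologicalSpace A] [DiscreteTopology A]
    (σ : A → List A) (hσ : SubstMin.IsSubstitution σ)
    (hprim : SubstMin.LPrimitive σ) (htame : SubstMin.Tame σ) :
    SubstMin.IsMinimalSubshift (SubstMin.XSub σ) := by
  obtain ⟨hne, hlong⟩ := hσ
  refine ⟨SubstMin.XSub_nonempty hlong, fun Y hYX ⟨y, hy⟩ hcl hinv => ?_⟩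
  refine hYX.antisymm fun x hx => ?_
  by_contra hxY
  obtain ⟨I, u, hu, hsub⟩ := isOpen_pi_iff.1 hcl.isOpen_compl x hxY
  obtain ⟨N, hN⟩ : ∃ N : ℕ, ∀ i ∈ I, i.natAbs ≤ N :=
    ⟨I.sup Int.natAbs, fun i hi => Finset.le_sup (f := Int.natAbs) hi⟩
  -- a translate of `y` agrees with `x` on a window containing `I`
  obtain ⟨p, hp⟩ := SubstMin.exists_shift_agree hne hprim htame hx (hYX hy)
    (show -(N : ℤ) ≤ N by omega)
  refine hsub (a := fun j => y (j + p)) (fun i hi => ?_) (SubstMin.shift_mem hinv hy p)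
  have := hN i hi
  change y (i + p) ∈ u i
  rw [← hp i (by omega) (by omega)]
  exact (hu i hi).2
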